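/- arXiv:2304.07906 — 5 statements merged into one kernel-verified Lean document; each statement's English description precedes it below -/
import Mathlib

section
/- For every t ≥ 1, the maximum size s_max(t) of a Sidon set in F_2^t satisfies: s_max(t) ≤ 2^((t+1)/2) if t is odd, and s_max(t) ≤ ⌊√(2^(t+1)) + 0.5⌋ if t is even. -/
/-- A subset `M` of `𝔽₂ᵗ` is Sidon if `m₁+m₂ ≠ m₃+m₄` for pairwise distinct elements. -/
def IsSidon {t : ℕ} (M : Finset (Fin t → ZMod 2)) : Prop :=
  ∀ m₁ ∈ M, ∀ m₂ ∈ M, ∀ m₃ ∈ M, ∀ m₄ ∈ M,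
    (m₁ ≠ m₂ ∧ m₁ ≠ m₃ ∧ m₁ ≠ m₄ ∧ m₂ ≠ m₃ ∧ m₂ ≠ m₄ ∧ m₃ ≠ m₄) →
    m₁ + m₂ ≠ m₃ + m₄

/-- `M` is sum-free if `m₁+m₂ ≠ m₃` for all `m₁,m₂,m₃ ∈ M`. -/
def IsSumFree {t : ℕ} (M : Finset (Fin t → ZMod 2)) : Prop :=
  ∀ m₁ ∈ M, ∀ m₂ ∈ M, ∀ m₃ ∈ M, m₁ + m₂ ≠ m₃

/-- A maximal Sidon set. -/
def IsMaximalSidon {t : ℕ} (M : Finset (Fin t → ZMod 2)) : Prop :=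
  IsSidon M ∧ ∀ S : Finset (Fin t → ZMod 2), IsSidon S → M ⊆ S → S = M

/-- Maximum size of a Sidon set in `𝔽₂ᵗ`. -/
noncomputable def sMax (t : ℕ) : ℕ :=
  sSup {n : ℕ | ∃ M : Finset (Fin t → ZMod 2), IsSidon M ∧ M.card = n}

/-- 2-sums of `M`. -/
def twoSums {t : ℕ} (M : Finset (Fin t → ZMod 2)) : Finset (Fin t → ZMod 2) :=
  (M ×ˢ M).image fun p => p.1 + p.2

/-- 2-star-sums of `M` (sums of two distinct elements). -/
def twoStarSums {t : ℕ} (M : Finset (Fin t → ZMod 2)) : Finset (Fin t → ZMod 2) :=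
  ((M ×ˢ M).filter fun p => p.1 ≠ p.2).image fun p => p.1 + p.2

/-- 3-sums of `M`. -/
def threeSums {t : ℕ} (M : Finset (Fin t → ZMod 2)) : Finset (Fin t → ZMod 2) :=
  ((M ×ˢ M) ×ˢ M).image fun p => p.1.1 + p.1.2 + p.2

/-- 3-star-sums of `M` (sums of three pairwise distinct elements). -/
def threeStarSums {t : ℕ} (M : Finset (Fin t → ZMod 2)) : Finset (Fin t → ZMod 2) :=
  (((M ×ˢ M) ×ˢ M).filter fun p => p.1.1 ≠ p.1.2 ∧ p.1.1 ≠ p.2 ∧ p.1.2 ≠ p.2).image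
    fun p => p.1.1 + p.1.2 + p.2

/-- 4-sums of `M`. -/
def fourSums {t : ℕ} (M : Finset (Fin t → ZMod 2)) : Finset (Fin t → ZMod 2) :=
  (((M ×ˢ M) ×ˢ M) ×ˢ M).image fun p => p.1.1.1 + p.1.1.2 + p.1.2 + p.2

theorem sidon_card_aux {t : ℕ} (M : Finset (Fin t → ZMod 2)) (hM : IsSidon M) :
    M.card * (M.card - 1) + 2 ≤ 2 ^ (t + 1) := by
  classical
  have hz : ∀ a b : Fin t → ZMod 2, a + b = 0 → a = b := by
    intro a b h
    funext i
    have h1 := congrFun h i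
    have key : ∀ x y : ZMod 2, x + y = 0 → x = y := by decide
    exact key _ _ h1
  have h1 : (M.powersetCard 2).card ≤ ((Finset.univ : Finset (Fin t → ZMod 2)).erase 0).card := by
    apply Finset.card_le_card_of_injOn (fun s => ∑ x ∈ s, x)
    · intro s hs
      have hs' := Finset.mem_powersetCard.1 (Finset.mem_coe.1 hs)
      obtain ⟨a, b, hab, rfl⟩ := Finset.card_eq_two.1 hs'.2
      simp only [Finset.coe_erase, Finset.coe_univ, Set.mem_sdiff, Set.mem_univ, true_and,
        Set.mem_singleton_iff, Finset.sum_pair hab]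
      exact fun h => hab (hz _ _ h)
    · intro s hs s' hs' h
      have hs := Finset.mem_powersetCard.1 (Finset.mem_coe.1 hs)
      have hs' := Finset.mem_powersetCard.1 (Finset.mem_coe.1 hs')
      obtain ⟨a, b, hab, rfl⟩ := Finset.card_eq_two.1 hs.2
      obtain ⟨c, d, hcd, rfl⟩ := Finset.card_eq_two.1 hs'.2
      simp only [Finset.sum_pair hab, Finset.sum_pair hcd] at h
      have ha : a ∈ M := hs.1 (by simp)
      have hb : b ∈ M := hs.1 (by simp)
      have hc : c ∈ M := hs'.1 (by simp)
      have hd : d ∈ M := hs'.1 (by simp)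
      by_cases hac : a = c
      · subst hac
        rw [add_left_cancel h]
      by_cases had : a = d
      · subst had
        rw [add_comm c a] at h
        rw [add_left_cancel h, Finset.pair_comm]
      by_cases hbc : b = c
      · subst hbc
        rw [add_comm a b] at h
        exact absurd (add_left_cancel h) had
      by_cases hbd : b = d
      · subst hbd
        exact absurd (add_right_cancel h) hac
      exact absurd h (hM a ha b hb c hc d hd ⟨hab, hac, had, hbc, hbd, hcd⟩)
  rw [Finset.card_powersetCard, Finset.card_erase_of_mem (Finset.mem_univ _), Finset.card_univ,
    Fintype.card_fun, ZMod.card, Fintype.card_fin, Nat.choose_two_right] at h1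
  have h2 := Nat.div_mul_cancel (Nat.even_mul_pred_self M.card).two_dvd
  have h3 : 0 < 2 ^ t := by positivity
  rw [pow_succ]
  omega

theorem sidon_trivial_upper_bound (t : ℕ) (ht : 1 ≤ t) :
    (Odd t → sMax t ≤ 2 ^ ((t + 1) / 2)) ∧
    (Even t → sMax t ≤ ⌊Real.sqrt ((2 : ℝ) ^ (t + 1)) + 0.5⌋₊) := by
  have hne : {n : ℕ | ∃ M : Finset (Fin t → ZMod 2), IsSidon M ∧ M.card = n}.Nonempty :=
    ⟨0, ∅, by simp [IsSidon], rfl⟩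
  refine ⟨fun hodd => csSup_le hne ?_, fun _ => csSup_le hne ?_⟩
  · rintro n ⟨M, hM, rfl⟩
    have h := sidon_card_aux M hM
    obtain ⟨k, rfl⟩ := hodd
    have e : (2 * k + 1 + 1) / 2 = k + 1 := by omega
    have e2 : 2 ^ (2 * k + 1 + 1) = 2 ^ (k + 1) * 2 ^ (k + 1) := by rw [← pow_add]; congr 1; omega
    rw [e]
    rw [e2] at h
    generalize 2 ^ (k + 1) = N at *
    by_contra! hlt
    have h4 : N * N ≤ M.card * (M.card - 1) := Nat.mul_le_mul (by omega) (by omega)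
    omega
  · rintro n ⟨M, hM, rfl⟩
    have h := sidon_card_aux M hM
    apply Nat.le_floor
    have hR : (M.card : ℝ) * (M.card - 1) + 2 ≤ 2 ^ (t + 1) := by
      rcases Nat.eq_zero_or_pos M.card with h0 | h0
      · rw [h0] at h ⊢
        have : ((0 * (0 - 1) + 2 : ℕ) : ℝ) ≤ ((2 ^ (t + 1) : ℕ) : ℝ) := by exact_mod_cast h
        push_cast at this
        simpa using this
      · have : ((M.card * (M.card - 1) + 2 : ℕ) : ℝ) ≤ ((2 ^ (t + 1) : ℕ) : ℝ) := by
          exact_mod_cast h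
        push_cast [Nat.cast_sub (show 1 ≤ M.card from h0)] at this
        exact this
    have := Real.le_sqrt_of_sq_le (x := (M.card : ℝ) - 0.5) (y := 2 ^ (t + 1)) (by nlinarith)
    linarith
end

section
/- For every even natural number t ≥ 2, ⌊(1 + √(2^(t+3) − 7))/2⌋ = ⌊√(2^(t+1)) + 0.5⌋ (floors of the indicated real numbers). -/
theorem floor_identity_even (t : ℕ) (ht : 2 ≤ t) (hev : Even t) :
    ⌊(1 + Real.sqrt ((2 : ℝ) ^ (t + 3) - 7)) / 2⌋₊ =
      ⌊Real.sqrt ((2 : ℝ) ^ (t + 1)) + 0.5⌋₊ := by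
  have key : ∀ n : ℕ, n ≠ 0 → ((2 * (n : ℝ) - 1) ^ 2 ≤ 2 ^ (t + 3) - 7 ↔
      (2 * (n : ℝ) - 1) ^ 2 ≤ 4 * 2 ^ (t + 1)) := by
    intro n hn
    obtain ⟨k, hk⟩ := Int.even_mul_succ_self ((n : ℤ) - 1)
    have hk' : ((n : ℤ) - 1) * n = 2 * k := by
      rw [sub_add_cancel] at hk
      omega
    have hz : (2 * (n : ℤ) - 1) ^ 2 = 8 * k + 1 := by linear_combination 4 * hk'
    have hp : (2 : ℤ) ^ (t + 3) = 8 * 2 ^ t := by ring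
    have hq : (4 : ℤ) * 2 ^ (t + 1) = 8 * 2 ^ t := by ring
    have h : (2 * (n : ℤ) - 1) ^ 2 ≤ 2 ^ (t + 3) - 7 ↔
        (2 * (n : ℤ) - 1) ^ 2 ≤ 4 * 2 ^ (t + 1) := by
      rw [hz, hp, hq]
      omega
    exact_mod_cast h
  refine eq_of_forall_le_iff fun n => ?_
  rcases Nat.eq_zero_or_pos n with rfl | hn
  · simp
  have hn1 : (1 : ℝ) ≤ n := by exact_mod_cast hn
  have h0 : (0 : ℝ) < 2 * n - 1 := by linarith
  rw [Nat.le_floor_iff' hn.ne', Nat.le_floor_iff' hn.ne']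
  have h4 : Real.sqrt (4 * 2 ^ (t + 1)) = 2 * Real.sqrt ((2 : ℝ) ^ (t + 1)) := by
    rw [Real.sqrt_mul (by norm_num), show (4 : ℝ) = 2 ^ 2 by norm_num,
      Real.sqrt_sq (by norm_num)]
  have hk := key n hn.ne'
  rw [← Real.le_sqrt' h0, ← Real.le_sqrt' h0, h4] at hk
  constructor
  · intro h
    have := hk.1 (by linarith)
    norm_num
    linarith
  · intro h
    norm_num at h
    have := hk.2 (by linarith)
    linarith
end

section
/- Let M be a Sidon set in F_2^t with |M| ≥ 3. The following are equivalent: (a) M is maximal Sidon; (b) the 3-sums 3Σ(M) equal all of F_2^t; (c) 3Σ*(M) ∪ M = F_2^t and 3Σ*(M) ∩ M = ∅. -/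
theorem vadd_self {t : ℕ} (x : Fin t → ZMod 2) : x + x = 0 := by
  funext i
  exact CharTwo.add_self_eq_zero (x i)

theorem mem_threeStar {t : ℕ} (M : Finset (Fin t → ZMod 2)) (x : Fin t → ZMod 2) :
    x ∈ threeStarSums M ↔ ∃ a ∈ M, ∃ b ∈ M, ∃ c ∈ M, (a ≠ b ∧ a ≠ c ∧ b ≠ c) ∧ a + b + c = x := by
  simp only [threeStarSums, Finset.mem_image, Finset.mem_filter, Finset.mem_product, Prod.exists]
  constructor
  · rintro ⟨a, b, c, ⟨⟨⟨ha, hb⟩, hc⟩, hd⟩, h⟩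
    exact ⟨a, ha, b, hb, c, hc, hd, h⟩
  · rintro ⟨a, ha, b, hb, c, hc, hd, h⟩
    exact ⟨a, b, c, ⟨⟨⟨ha, hb⟩, hc⟩, hd⟩, h⟩

theorem threeSums_eq {t : ℕ} (M : Finset (Fin t → ZMod 2)) :
    threeSums M = threeStarSums M ∪ M := by
  ext x
  rw [Finset.mem_union, mem_threeStar]
  simp only [threeSums, Finset.mem_image, Finset.mem_product, Prod.exists]
  constructor
  · rintro ⟨a, b, c, ⟨⟨ha, hb⟩, hc⟩, h⟩
    by_cases h1 : a = b
    · right; subst h1; rw [vadd_self, zero_add] at h; exact h ▸ hc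
    by_cases h2 : a = c
    · right; subst h2; rw [add_right_comm, vadd_self, zero_add] at h; exact h ▸ hb
    by_cases h3 : b = c
    · right; subst h3; rw [add_assoc, vadd_self, add_zero] at h; exact h ▸ ha
    exact Or.inl ⟨a, ha, b, hb, c, hc, ⟨h1, h2, h3⟩, h⟩
  · rintro (⟨a, ha, b, hb, c, hc, hd, h⟩ | h)
    · exact ⟨a, b, c, ⟨⟨ha, hb⟩, hc⟩, h⟩
    · exact ⟨x, x, x, ⟨⟨h, h⟩, h⟩, by rw [vadd_self, zero_add]⟩

/-- In a Sidon set, no element is a sum of three distinct other elements of the set. -/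
theorem sidon_no_three {t : ℕ} {S : Finset (Fin t → ZMod 2)} (hS : IsSidon S)
    {a b c x : Fin t → ZMod 2} (ha : a ∈ S) (hb : b ∈ S) (hc : c ∈ S) (hx : x ∈ S)
    (hd : a ≠ b ∧ a ≠ c ∧ b ≠ c) (h : a + b + c = x) : False := by
  obtain ⟨h1, h2, h3⟩ := hd
  have key : a + b = c + x := by
    rw [← h, show c + (a + b + c) = a + b + (c + c) by abel, vadd_self, add_zero]
  have e1 : a ≠ x := by
    rintro rfl
    rw [add_comm c a] at key
    exact h3 (add_left_cancel key)
  have e2 : b ≠ x := by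
    rintro rfl
    exact h2 (add_right_cancel key)
  have e3 : c ≠ x := by
    rintro rfl
    rw [vadd_self, ← vadd_self b] at key
    exact h1 (add_right_cancel key)
  exact hS a ha b hb c hc x hx ⟨h1, h2, e1, h3, e2, e3⟩ key

theorem maximalSidon_iff_cover {t : ℕ} (M : Finset (Fin t → ZMod 2)) (hM : IsSidon M) :
    IsMaximalSidon M ↔ threeStarSums M ∪ M = Finset.univ := by
  constructor
  · rintro ⟨-, hmax⟩
    rw [Finset.eq_univ_iff_forall]
    intro x
    rw [Finset.mem_union]
    by_contra hx
    rw [not_or, mem_threeStar] at hx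
    obtain ⟨hx1, hx2⟩ := hx
    have key : ∀ a ∈ insert x M, ∀ b ∈ insert x M, ∀ c ∈ insert x M,
        (a ≠ b ∧ a ≠ c ∧ b ≠ c) → a ≠ x → b ≠ x → c ≠ x → a + b + c ≠ x := by
      intro a ha b hb c hc hd h1 h2 h3 h
      exact hx1 ⟨a, Finset.mem_of_mem_insert_of_ne ha h1, b,
        Finset.mem_of_mem_insert_of_ne hb h2, c, Finset.mem_of_mem_insert_of_ne hc h3, hd, h⟩
    have hS : IsSidon (insert x M) := by
      rintro a ha b hb c hc d hd ⟨h1, h2, h3, h4, h5, h6⟩ h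
      by_cases e1 : a = x
      · subst e1
        refine key b hb c hc d hd ⟨h4, h5, h6⟩ h1.symm h2.symm h3.symm ?_
        rw [add_assoc, ← h, add_left_comm, vadd_self, add_zero]
      by_cases e2 : b = x
      · subst e2
        refine key a ha c hc d hd ⟨h2, h3, h6⟩ h1 h4.symm h5.symm ?_
        rw [add_assoc, ← h, ← add_assoc, vadd_self, zero_add]
      by_cases e3 : c = x
      · subst e3
        refine key a ha b hb d hd ⟨h1, h3, h5⟩ h2 h4 h6.symm ?_
        rw [h, add_assoc, vadd_self, add_zero]
      by_cases e4 : d = x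
      · subst e4
        refine key a ha b hb c hc ⟨h1, h2, h4⟩ h3 h5 h6 ?_
        rw [h, add_right_comm, vadd_self, zero_add]
      exact hM a (Finset.mem_of_mem_insert_of_ne ha e1) b (Finset.mem_of_mem_insert_of_ne hb e2)
        c (Finset.mem_of_mem_insert_of_ne hc e3) d (Finset.mem_of_mem_insert_of_ne hd e4)
        ⟨h1, h2, h3, h4, h5, h6⟩ h
    have := hmax _ hS (Finset.subset_insert x M)
    exact hx2 (this ▸ Finset.mem_insert_self x M)
  · intro h
    refine ⟨hM, fun S hS hMS => Finset.Subset.antisymm ?_ hMS⟩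
    intro x hx
    have hu : x ∈ threeStarSums M ∪ M := h ▸ Finset.mem_univ x
    rcases Finset.mem_union.1 hu with h1 | h1
    · obtain ⟨a, ha, b, hb, c, hc, hd, e⟩ := (mem_threeStar M x).1 h1
      exact (sidon_no_three hS (hMS ha) (hMS hb) (hMS hc) hx hd e).elim
    · exact h1

theorem maximal_sidon_characterisation {t : ℕ} (M : Finset (Fin t → ZMod 2))
    (hM : IsSidon M) (hcard : 3 ≤ M.card) :
    (IsMaximalSidon M ↔ threeSums M = Finset.univ) ∧
    (IsMaximalSidon M ↔
      (threeStarSums M ∪ M = Finset.univ ∧ Disjoint (threeStarSums M) M)) := by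
  have hdisj : Disjoint (threeStarSums M) M := by
    rw [Finset.disjoint_left]
    intro x h1 hx
    obtain ⟨a, ha, b, hb, c, hc, hd, e⟩ := (mem_threeStar M x).1 h1
    exact sidon_no_three hM ha hb hc hx hd e
  refine ⟨?_, ?_⟩
  · rw [threeSums_eq]
    exact maximalSidon_iff_cover M hM
  · rw [maximalSidon_iff_cover M hM]
    exact ⟨fun h => ⟨h, hdisj⟩, fun h => h.1⟩
end

section
/- Every maximal Sidon set in F_2^4 has cardinality 6, and is the image under some affine permutation of the set {0, e_1, e_2, e_3, e_4, e_1+e_2+e_3+e_4}, where e_1,...,e_4 is the standard basis of F_2^4. -/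
/-- The standard basis vectors of `𝔽₂ᵗ`. -/
def stdBasis {t : ℕ} (i : Fin t) : Fin t → ZMod 2 := Pi.single i 1

lemma sidon_image {t : ℕ} (f : (Fin t → ZMod 2) ≃ₗ[ZMod 2] (Fin t → ZMod 2)) (a : Fin t → ZMod 2)
    (S : Finset (Fin t → ZMod 2)) (h : IsSidon S) :
    IsSidon (Finset.image (fun x => f x + a) S) := by
  intro m₁ h₁ m₂ h₂ m₃ h₃ m₄ h₄ hne heq
  simp only [Finset.mem_image] at h₁ h₂ h₃ h₄
  obtain ⟨x₁, h₁, rfl⟩ := h₁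
  obtain ⟨x₂, h₂, rfl⟩ := h₂
  obtain ⟨x₃, h₃, rfl⟩ := h₃
  obtain ⟨x₄, h₄, rfl⟩ := h₄
  simp only [ne_eq, add_left_inj, EmbeddingLike.apply_eq_iff_eq] at hne
  apply h x₁ h₁ x₂ h₂ x₃ h₃ x₄ h₄ hne
  apply f.injective
  rw [map_add, map_add]
  have : (f x₁ + f x₂) + (a + a) = (f x₃ + f x₄) + (a + a) := by
    rw [add_add_add_comm, heq, add_add_add_comm]
  exact add_right_cancel this

lemma sidon_insert {t : ℕ} (M : Finset (Fin t → ZMod 2)) (h : IsSidon M) (a x : Fin t → ZMod 2)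
    (W : Submodule (ZMod 2) (Fin t → ZMod 2)) (hW : ∀ m ∈ M, m - a ∈ W) (hx : x ∉ W) :
    IsSidon (insert (a + x) M) := by
  have key : ∀ p ∈ M, ∀ q ∈ M, ∀ r ∈ M, a + x ≠ p + q - r := by
    intro p hp q hq r hr he
    apply hx
    have : x = (p - a) + (q - a) - (r - a) := by
      rw [← sub_eq_iff_eq_add'.mpr he.symm]; abel
    rw [this]
    exact W.sub_mem (W.add_mem (hW p hp) (hW q hq)) (hW r hr)
  intro m₁ h₁ m₂ h₂ m₃ h₃ m₄ h₄ hne heq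
  obtain ⟨n1, n2, n3, n4, n5, n6⟩ := hne
  rw [Finset.mem_insert] at h₁ h₂ h₃ h₄
  rcases h₁ with h₁ | h₁
  · have h2 : m₂ ∈ M := by grind
    have h3 : m₃ ∈ M := by grind
    have h4 : m₄ ∈ M := by grind
    exact key _ h3 _ h4 _ h2 (by rw [← h₁, ← heq]; abel)
  rcases h₂ with h₂ | h₂
  · have h3 : m₃ ∈ M := by grind
    have h4 : m₄ ∈ M := by grind
    exact key _ h3 _ h4 _ h₁ (by rw [← h₂, ← heq]; abel)
  rcases h₃ with h₃ | h₃
  · have h4 : m₄ ∈ M := by grind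
    exact key _ h₁ _ h₂ _ h4 (by rw [← h₃, heq]; abel)
  rcases h₄ with h₄ | h₄
  · exact key _ h₁ _ h₂ _ h₃ (by rw [← h₄, heq]; abel)
  exact h _ h₁ _ h₂ _ h₃ _ h₄ ⟨n1, n2, n3, n4, n5, n6⟩ heq

lemma six_cover : ∀ y : Fin 4 → ZMod 2,
    y ∈ ({0, stdBasis 0, stdBasis 1, stdBasis 2, stdBasis 3,
          stdBasis 0 + stdBasis 1 + stdBasis 2 + stdBasis 3} : Finset (Fin 4 → ZMod 2)) ∨
    ∃ p ∈ ({0, stdBasis 0, stdBasis 1, stdBasis 2, stdBasis 3} : Finset (Fin 4 → ZMod 2)),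
    ∃ q ∈ ({0, stdBasis 0, stdBasis 1, stdBasis 2, stdBasis 3} : Finset (Fin 4 → ZMod 2)),
    ∃ r ∈ ({0, stdBasis 0, stdBasis 1, stdBasis 2, stdBasis 3} : Finset (Fin 4 → ZMod 2)),
      (y ≠ p ∧ y ≠ q ∧ y ≠ r ∧ p ≠ q ∧ p ≠ r ∧ q ≠ r) ∧ y + p = q + r := by
  decide +kernel

lemma six_sidon : IsSidon ({0, stdBasis 0, stdBasis 1, stdBasis 2, stdBasis 3,
          stdBasis 0 + stdBasis 1 + stdBasis 2 + stdBasis 3} : Finset (Fin 4 → ZMod 2)) := by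
  unfold IsSidon
  decide +kernel

lemma six_card : ({0, stdBasis 0, stdBasis 1, stdBasis 2, stdBasis 3,
          stdBasis 0 + stdBasis 1 + stdBasis 2 + stdBasis 3} : Finset (Fin 4 → ZMod 2)).card
            = 6 := by
  decide +kernel

theorem maximal_sidon_dim4 (M : Finset (Fin 4 → ZMod 2)) (hM : IsMaximalSidon M) :
    M.card = 6 ∧
    ∃ (L : (Fin 4 → ZMod 2) ≃ₗ[ZMod 2] (Fin 4 → ZMod 2)) (a : Fin 4 → ZMod 2),
      Finset.image (fun x => L x + a)
        ({0, stdBasis 0, stdBasis 1, stdBasis 2, stdBasis 3,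
          stdBasis 0 + stdBasis 1 + stdBasis 2 + stdBasis 3} :
            Finset (Fin 4 → ZMod 2)) = M := by
  obtain ⟨hS, hmax⟩ := hM
  -- `M` is nonempty
  obtain ⟨a, ha⟩ : M.Nonempty := by
    by_contra hne
    rw [Finset.not_nonempty_iff_eq_empty] at hne
    subst hne
    have := hmax {0} (by
      intro m₁ h₁ m₂ h₂ m₃ h₃ m₄ h₄ hn
      simp only [Finset.mem_singleton] at h₁ h₂
      exact absurd (h₁.trans h₂.symm) hn.1) (by simp)
    simp at this
  -- the differences span
  let s : Set (Fin 4 → ZMod 2) := (fun m => m - a) '' (M : Set (Fin 4 → ZMod 2))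
  have hsub : ∀ m ∈ M, m - a ∈ Submodule.span (ZMod 2) s := fun m hm =>
    Submodule.subset_span ⟨m, hm, rfl⟩
  have hspan : Submodule.span (ZMod 2) s = ⊤ := by
    rw [Submodule.eq_top_iff']
    intro x
    by_contra hx
    have h1 := hmax _ (sidon_insert M hS a x _ hsub hx) (Finset.subset_insert _ _)
    have h2 : a + x ∈ M := by
      rw [← h1]; exact Finset.mem_insert_self _ _
    apply hx
    simpa using hsub _ h2
  obtain ⟨b, hbs, hbspan, hbli⟩ := exists_linearIndependent (ZMod 2) s
  let B : Module.Basis b (ZMod 2) (Fin 4 → ZMod 2) :=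
    Module.Basis.mk hbli (by rw [Subtype.range_coe, hbspan, hspan])
  haveI : Fintype b := Fintype.ofFinite b
  have hcard : Fintype.card b = 4 := by
    rw [← Module.finrank_eq_card_basis B]; simp
  let e := Fintype.equivFinOfCardEq hcard
  let L : (Fin 4 → ZMod 2) ≃ₗ[ZMod 2] (Fin 4 → ZMod 2) :=
    (Pi.basisFun (ZMod 2) (Fin 4)).equiv B e.symm
  have hL : ∀ i, L (stdBasis i) + a ∈ M := by
    intro i
    have h1 : L (stdBasis i) = (e.symm i : Fin 4 → ZMod 2) := by
      have : stdBasis i = Pi.basisFun (ZMod 2) (Fin 4) i := by simp [stdBasis]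
      rw [this, Module.Basis.equiv_apply]
      simp [B]
    obtain ⟨m, hm, hme⟩ := hbs (e.symm i).2
    rw [h1, ← hme]
    simpa using hm
  have hP : ∀ p ∈ ({0, stdBasis 0, stdBasis 1, stdBasis 2, stdBasis 3} :
      Finset (Fin 4 → ZMod 2)), L p + a ∈ M := by
    intro p hp
    simp only [Finset.mem_insert, Finset.mem_singleton] at hp
    rcases hp with rfl | rfl | rfl | rfl | rfl
    · simpa using ha
    all_goals exact hL _
  have hfin := hmax _ (sidon_image L a _ six_sidon) (by
    intro x hx
    obtain ⟨y, rfl⟩ : ∃ y, L y + a = x := ⟨L.symm (x - a), by simp⟩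
    rcases six_cover y with h | ⟨p, hp, q, hq, r, hr, hne, he⟩
    · exact Finset.mem_image_of_mem _ h
    · exfalso
      refine hS _ hx _ (hP p hp) _ (hP q hq) _ (hP r hr) ?_ ?_
      · simpa only [ne_eq, add_left_inj, EmbeddingLike.apply_eq_iff_eq] using hne
      · rw [add_add_add_comm, ← map_add, he, map_add, add_add_add_comm])
  refine ⟨?_, L, a, hfin⟩
  rw [← hfin, Finset.card_image_of_injective, six_card]
  intro x y hxy
  simpa using hxy
end

section
/- Let t ≥ 6, let N = ⌊√(2^(t+1)) + 0.5⌋, write N − 4 = 3a + b with a ≥ 0 an integer and b ∈ {0,1,2}, and let ε = √(2^(t+1)) + 0.5 − N ∈ [0,1). Define λ by: λ = 1 if a is odd and b = 0; λ = 2 if a is odd, b = 1 and 0 ≤ ε ≤ 1 − 2^(−(t−4)/2); λ = 1 if a is odd, b = 1 and 1 − 2^(−(t−4)/2) < ε < 1; λ = 2 if a is odd and b = 2; λ = 2 if a is even, b = 0 and 0 ≤ ε ≤ 0.5; λ = 1 if a is even, b = 0 and 0.5 < ε < 1; λ = 2 if a is even, b = 1 and 0 ≤ ε ≤ 1 − 2^(−(t−5)/2);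 λ = 1 if a is even, b = 1 and 1 − 2^(−(t−5)/2) < ε ≤ 1 − 2^(−(t+7)/2); λ = 0 if a is even, b = 1 and 1 − 2^(−(t+7)/2) < ε < 1; λ = 0 if a is even and b = 2. Set n_t = N − λ. Then there is no linear subspace of F_2^(n_t) of dimension n_t − t in which every nonzero vector has Hamming weight at least 5; consequently s_max(t) ≤ 2^((t+1)/2) − 2 if t is odd, and s_max(t) ≤ N − λ if t is even. -/
namespace SidonAux

lemma dbl {t : ℕ} (x : Fin t → ZMod 2) : x + x = 0 := by
  ext i; exact CharTwo.add_self_eq_zero (x i)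

lemma sidon_subset {t : ℕ} {M S : Finset (Fin t → ZMod 2)} (h : IsSidon M) (hS : S ⊆ M) :
    IsSidon S := fun a ha b hb c hc d hd => h a (hS ha) b (hS hb) c (hS hc) d (hS hd)

/-- triples of `M` with sum `x` -/
def fib {t : ℕ} (M : Finset (Fin t → ZMod 2)) (x : Fin t → ZMod 2) :
    Finset (Finset (Fin t → ZMod 2)) :=
  (M.powersetCard 3).filter fun A => ∑ a ∈ A, a = x

lemma mem_fib {t : ℕ} {M : Finset (Fin t → ZMod 2)} {x : Fin t → ZMod 2}
    {A : Finset (Fin t → ZMod 2)} :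
    A ∈ fib M x ↔ (A ⊆ M ∧ A.card = 3) ∧ ∑ a ∈ A, a = x := by
  simp [fib, Finset.mem_powersetCard]

lemma sum_not_mem {t : ℕ} {M A : Finset (Fin t → ZMod 2)} (h : IsSidon M) (hA : A ⊆ M)
    (h3 : A.card = 3) : ∑ a ∈ A, a ∉ M := by
  intro hm
  obtain ⟨a, b, c, hab, hac, hbc, rfl⟩ := Finset.card_eq_three.1 h3
  have hs : ∑ x ∈ ({a, b, c} : Finset (Fin t → ZMod 2)), x = a + b + c := by
    rw [Finset.sum_insert (by simp [hab, hac]), Finset.sum_insert (by simp [hbc]),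
      Finset.sum_singleton, add_assoc]
  rw [hs] at hm
  have ha : a ∈ M := hA (by simp)
  have hb : b ∈ M := hA (by simp)
  have hc : c ∈ M := hA (by simp)
  refine h a ha b hb c hc _ hm ⟨hab, hac, ?_, hbc, ?_, ?_⟩ ?_
  · intro e; exact hbc (by linear_combination -e - dbl c)
  · intro e; exact hac (by linear_combination -e - dbl c)
  · intro e; exact hab (by linear_combination -e - dbl b)
  · linear_combination - dbl c

lemma fib_disjoint {t : ℕ} {M : Finset (Fin t → ZMod 2)} (h : IsSidon M) {x : Fin t → ZMod 2}
    {A B : Finset (Fin t → ZMod 2)} (hA : A ∈ fib M x) (hB : B ∈ fib M x) (hAB : A ≠ B) :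
    Disjoint A B := by
  rw [mem_fib] at hA hB
  obtain ⟨⟨hAM, hA3⟩, hAx⟩ := hA
  obtain ⟨⟨hBM, hB3⟩, hBx⟩ := hB
  rw [Finset.disjoint_left]
  intro i hiA hiB
  apply hAB
  have eA := Finset.insert_erase hiA
  have eB := Finset.insert_erase hiB
  have cA : (A.erase i).card = 2 := by rw [Finset.card_erase_of_mem hiA, hA3]
  have cB : (B.erase i).card = 2 := by rw [Finset.card_erase_of_mem hiB, hB3]
  have sA := Finset.add_sum_erase A (fun a => a) hiA
  have sB := Finset.add_sum_erase B (fun a => a) hiB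
  have ss : ∑ a ∈ A.erase i, a = ∑ a ∈ B.erase i, a := by
    rw [hAx] at sA; rw [hBx, ← sA] at sB
    exact (add_left_cancel sB).symm
  suffices hh : A.erase i = B.erase i by rw [← eA, ← eB, hh]
  obtain ⟨a, b, hab, eA'⟩ := Finset.card_eq_two.1 cA
  obtain ⟨c, d, hcd, eB'⟩ := Finset.card_eq_two.1 cB
  have hsub1 : A.erase i ⊆ M := (Finset.erase_subset _ _).trans hAM
  have hsub2 : B.erase i ⊆ M := (Finset.erase_subset _ _).trans hBM
  rw [eA'] at ss hsub1 ⊢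
  rw [eB'] at ss hsub2 ⊢
  rw [Finset.sum_pair hab, Finset.sum_pair hcd] at ss
  have ha : a ∈ M := hsub1 (by simp)
  have hb : b ∈ M := hsub1 (by simp)
  have hc : c ∈ M := hsub2 (by simp)
  have hd : d ∈ M := hsub2 (by simp)
  by_cases h1 : a = c
  · subst h1; rw [add_left_cancel ss]
  by_cases h2 : a = d
  · subst h2
    have : b = c := by linear_combination ss
    subst this; exact Finset.pair_comm _ _
  by_cases h3 : b = c
  · subst h3
    exact absurd (by linear_combination ss) h2
  by_cases h4 : b = d
  · subst h4
    exact absurd (by linear_combination ss) h1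
  exact absurd ss (h a ha b hb c hc d hd ⟨hab, h1, h2, h3, h4, hcd⟩)

/-- union of the triples with sum `x` -/
def U {t : ℕ} (M : Finset (Fin t → ZMod 2)) (x : Fin t → ZMod 2) : Finset (Fin t → ZMod 2) :=
  (fib M x).biUnion id

lemma U_subset {t : ℕ} (M : Finset (Fin t → ZMod 2)) (x : Fin t → ZMod 2) : U M x ⊆ M := by
  intro y hy
  simp only [U, Finset.mem_biUnion, id] at hy
  obtain ⟨A, hA, hy⟩ := hy
  exact (mem_fib.1 hA).1.1 hy

lemma pairwise_disj {t : ℕ} {M : Finset (Fin t → ZMod 2)} (h : IsSidon M) (x : Fin t → ZMod 2) :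
    Set.PairwiseDisjoint (fib M x : Set (Finset (Fin t → ZMod 2))) id :=
  fun _ hA _ hB hAB => fib_disjoint h hA hB hAB

lemma card_U {t : ℕ} {M : Finset (Fin t → ZMod 2)} (h : IsSidon M) (x : Fin t → ZMod 2) :
    (U M x).card = 3 * (fib M x).card := by
  rw [U, Finset.card_biUnion (pairwise_disj h x),
    Finset.sum_congr rfl (f := fun A => (id A).card) (g := fun _ => 3) (fun A hA => (mem_fib.1 hA).1.2)]
  simp [mul_comm]

lemma sum_U {t : ℕ} {M : Finset (Fin t → ZMod 2)} (h : IsSidon M) (x : Fin t → ZMod 2) :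
    ∑ a ∈ U M x, a = (fib M x).card • x := by
  rw [U, Finset.sum_biUnion (pairwise_disj h x),
    Finset.sum_congr rfl (f := fun A => ∑ a ∈ id A, a) (g := fun _ => x) (fun A hA => (mem_fib.1 hA).2)]
  simp

lemma sum_M {t : ℕ} {M : Finset (Fin t → ZMod 2)} (h : IsSidon M) (x : Fin t → ZMod 2) :
    ∑ a ∈ M, a = ∑ a ∈ M \ U M x, a + (fib M x).card • x := by
  rw [← sum_U h x, Finset.sum_sdiff (U_subset M x)]

lemma card_left {t : ℕ} {M : Finset (Fin t → ZMod 2)} (h : IsSidon M) (x : Fin t → ZMod 2) :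
    (M \ U M x).card + 3 * (fib M x).card = M.card := by
  rw [← card_U h x, Finset.card_sdiff_add_card_eq_card (U_subset M x)]

lemma even_smul {t : ℕ} {k : ℕ} (hk : Even k) (x : Fin t → ZMod 2) : k • x = 0 := by
  obtain ⟨r, rfl⟩ := hk
  rw [add_smul]; exact dbl _

lemma odd_smul {t : ℕ} {k : ℕ} (hk : Odd k) (x : Fin t → ZMod 2) : k • x = x := by
  obtain ⟨r, rfl⟩ := hk
  rw [add_smul, even_smul (even_two_mul r)]; simp

lemma card_compl' {t : ℕ} (M : Finset (Fin t → ZMod 2)) : Mᶜ.card + M.card = 2 ^ t := by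
  have := Finset.card_compl_add_card M
  rw [this]; simp [ZMod.card]

lemma total {t : ℕ} {M : Finset (Fin t → ZMod 2)} (h : IsSidon M) :
    M.card.choose 3 = ∑ x ∈ Mᶜ, (fib M x).card := by
  rw [← Finset.card_powersetCard]
  exact Finset.card_eq_sum_card_fiberwise (f := fun A : Finset (Fin t → ZMod 2) => ∑ a ∈ A, a)
    (by
      intro A hA
      have hA := Finset.mem_powersetCard.1 (Finset.mem_coe.1 hA)
      simpa using sum_not_mem h hA.1 hA.2)

lemma total_p {t : ℕ} {M : Finset (Fin t → ZMod 2)} (h : IsSidon M) {p : Fin t → ZMod 2}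
    (hp : p ∈ M) :
    (M.card - 1).choose 2 = ∑ x ∈ Mᶜ, ((fib M x).filter fun A => p ∈ A).card := by
  have h1 : ((M.powersetCard 3).filter fun A => p ∈ A).card = (M.card - 1).choose 2 := by
    have e1 := Finset.card_filter_add_card_filter_not (s := M.powersetCard 3) (fun A => p ∈ A)
    have e2 : ((M.powersetCard 3).filter fun A => ¬ p ∈ A) = (M.erase p).powersetCard 3 := by
      ext A
      simp only [Finset.mem_filter, Finset.mem_powersetCard, Finset.subset_erase]
      tauto
    rw [e2, Finset.card_powersetCard, Finset.card_powersetCard, Finset.card_erase_of_mem hp] at e1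
    have : 0 < M.card := Finset.card_pos.2 ⟨p, hp⟩
    obtain ⟨m, hm⟩ : ∃ m, M.card = m + 1 := ⟨M.card - 1, by omega⟩
    rw [hm, Nat.choose_succ_succ] at e1
    rw [hm]
    simp only [Nat.add_sub_cancel, Nat.succ_eq_add_one, Nat.reduceAdd] at e1 ⊢
    omega
  rw [← h1, Finset.card_eq_sum_card_fiberwise
    (f := fun A : Finset (Fin t → ZMod 2) => ∑ a ∈ A, a) (t := Mᶜ)]
  · refine Finset.sum_congr rfl fun x _ => ?_
    congr 1
    ext A
    simp only [fib, Finset.mem_filter]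
    tauto
  · intro A hA
    have hA := Finset.mem_powersetCard.1 (Finset.mem_filter.1 (Finset.mem_coe.1 hA)).1
    simpa using sum_not_mem h hA.1 hA.2

lemma fib_p_le {t : ℕ} {M : Finset (Fin t → ZMod 2)} (h : IsSidon M) (p x : Fin t → ZMod 2) :
    ((fib M x).filter fun A => p ∈ A).card ≤ 1 := by
  rw [Finset.card_le_one]
  intro A hA B hB
  rw [Finset.mem_filter] at hA hB
  by_contra hne
  exact Finset.disjoint_left.1 (fib_disjoint h hA.1 hB.1 hne) hA.2 hB.2

/-- Generic bound with a point `p` which is always left over in the extremal case. -/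
lemma bound_p {t : ℕ} {M : Finset (Fin t → ZMod 2)} (h : IsSidon M) {p : Fin t → ZMod 2}
    (hp : p ∈ M) {k : ℕ} (hk : ∀ x, (fib M x).card ≤ k)
    (hpk : ∀ x, (fib M x).card = k → p ∉ U M x) :
    M.card.choose 3 + (M.card - 1).choose 2 ≤ Mᶜ.card * k := by
  rw [total h, total_p h hp, ← Finset.sum_add_distrib]
  rw [← smul_eq_mul]
  apply Finset.sum_le_card_nsmul
  intro x _
  have h1 := fib_p_le h p x
  have h2 := hk x
  by_cases h0 : ((fib M x).filter fun A => p ∈ A).card = 0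
  · omega
  · have : (fib M x).card ≠ k := by
      intro e
      apply hpk x e
      obtain ⟨A, hA⟩ := Finset.card_pos.1 (Nat.pos_of_ne_zero h0)
      rw [Finset.mem_filter] at hA
      simp only [U, Finset.mem_biUnion, id]
      exact ⟨A, hA⟩
    omega

/-- Generic bound with few extremal points. -/
lemma bound_E {t : ℕ} {M E : Finset (Fin t → ZMod 2)} (h : IsSidon M) {k : ℕ}
    (hk : ∀ x, (fib M x).card ≤ k + 1) (hE : ∀ x, (fib M x).card = k + 1 → x ∈ E) :
    M.card.choose 3 ≤ Mᶜ.card * k + E.card := by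
  rw [total h]
  calc ∑ x ∈ Mᶜ, (fib M x).card ≤ ∑ x ∈ Mᶜ, (k + if x ∈ E then 1 else 0) := by
        apply Finset.sum_le_sum
        intro x _
        have := hk x
        by_cases hx : x ∈ E
        · simpa [hx] using this
        · have : (fib M x).card ≠ k + 1 := fun e => hx (hE x e)
          simp only [hx, if_false]; omega
    _ ≤ _ := by
        rw [Finset.sum_add_distrib, Finset.sum_const, smul_eq_mul, ← Finset.card_filter]
        gcongr
        intro x hx
        exact (Finset.mem_filter.1 hx).2

lemma bound_0 {t : ℕ} {M : Finset (Fin t → ZMod 2)} (h : IsSidon M) {k : ℕ}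
    (hk : ∀ x, (fib M x).card ≤ k) : M.card.choose 3 ≤ Mᶜ.card * k := by
  rw [total h, ← smul_eq_mul]
  exact Finset.sum_le_card_nsmul _ _ _ fun x _ => hk x

lemma choose3 (m : ℕ) : (m + 2).choose 3 * 6 = (m + 2) * (m + 1) * m := by
  induction m with
  | zero => simp
  | succ m ih =>
    have h2 : (m + 2).choose 2 * 2 = (m + 2) * (m + 1) := by
      rw [Nat.choose_two_right, Nat.div_mul_cancel]
      · simp
      · exact (Nat.even_mul_pred_self (m + 2)).two_dvd
    rw [show m + 1 + 2 = (m + 2) + 1 by ring, Nat.choose_succ_succ]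
    nlinarith

lemma choose2 (m : ℕ) : (m + 2 - 1).choose 2 * 2 = (m + 1) * m := by
  rw [show m + 2 - 1 = m + 1 by omega, Nat.choose_two_right, Nat.div_mul_cancel]
  · simp
  · exact (Nat.even_mul_pred_self (m + 1)).two_dvd

/-- All needed numeric consequences. -/
lemma master {t : ℕ} {M : Finset (Fin t → ZMod 2)} (h : IsSidon M) (h8 : 8 ≤ M.card) :
    (M.card ^ 2 + 2 ≤ 2 ^ (t + 1) + M.card) ∧
    (M.card % 3 = 2 → M.card ^ 2 + M.card ≤ 2 ^ (t + 1)) ∧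
    (M.card % 6 = 1 → M.card ^ 2 + 3 * M.card ≤ 2 ^ (t + 1) + 6) ∧
    (M.card % 6 = 2 → M.card ^ 2 + 4 * M.card ≤ 2 ^ (t + 1) + 3) ∧
    (M.card % 6 = 3 → (M.card + 1) ^ 2 < 2 ^ (t + 1)) ∧
    (M.card % 6 = 4 → M.card ^ 2 + 3 * M.card < 2 ^ (t + 1) + 14) := by
  have hc := card_compl' M
  have hl := fun x => card_left h x
  obtain ⟨m, hm⟩ : ∃ m, M.card = m + 2 := ⟨M.card - 2, by omega⟩
  have c3 := choose3 m
  have c2 := choose2 m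
  rw [← hm] at c3 c2
  have hD : 2 ^ (t + 1) = 2 * (Mᶜ.card + M.card) := by rw [hc]; ring
  rw [hD]
  generalize hX : Mᶜ.card = X at *
  refine ⟨?_, ?_, ?_, ?_, ?_, ?_⟩
  · have hb := bound_0 h (k := M.card / 3) (fun x => by have := hl x; omega)
    have h3 : 3 * (M.card / 3) ≤ M.card := Nat.mul_div_le _ _
    rw [hX] at hb
    have : (m + 2) * ((m + 1) * m) ≤ (m + 2) * (2 * X) := by
      have : X * (3 * (M.card / 3)) ≤ X * M.card := Nat.mul_le_mul_left _ h3
      rw [hm] at *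
      nlinarith
    have := Nat.le_of_mul_le_mul_left this (by omega)
    rw [hm]; nlinarith
  · intro hmod
    have hb := bound_0 h (k := M.card / 3) (fun x => by have := hl x; omega)
    have h3 : 3 * (M.card / 3) = m := by omega
    rw [hX] at hb
    have : m * ((m + 2) * (m + 1)) ≤ m * (2 * X) := by
      have : X * (3 * (M.card / 3)) = X * m := by rw [h3]
      nlinarith
    have := Nat.le_of_mul_le_mul_left this (by omega)
    rw [hm]; nlinarith
  · intro hmod
    obtain ⟨p, hp, hpS⟩ : ∃ p ∈ M, (∑ a ∈ M, a ∈ M → p = ∑ a ∈ M, a) := by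
      by_cases hS : ∑ a ∈ M, a ∈ M
      · exact ⟨_, hS, fun _ => rfl⟩
      · obtain ⟨p, hp⟩ := Finset.card_pos.1 (show 0 < M.card by omega)
        exact ⟨p, hp, fun h => absurd h hS⟩
    have hb := bound_p h hp (k := M.card / 3) (fun x => by have := hl x; omega) (by
      intro x hx hpU
      have h1 := hl x
      have h2 := sum_M h x
      rw [hx, even_smul (by rw [Nat.even_iff]; omega), add_zero] at h2
      obtain ⟨q, hq⟩ := Finset.card_eq_one.1 (show (M \ U M x).card = 1 by omega)
      rw [hq, Finset.sum_singleton] at h2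
      have hqm : q ∈ M \ U M x := by rw [hq]; simp
      rw [Finset.mem_sdiff] at hqm
      have := hpS (h2 ▸ hqm.1)
      exact hqm.2 (by rw [← h2, ← this]; exact hpU))
    have h3 : 3 * (M.card / 3) = m + 1 := by omega
    rw [hX] at hb
    have : (m + 1) * ((m + 2) * m + 3 * m) ≤ (m + 1) * (2 * X) := by
      have : X * (3 * (M.card / 3)) = X * (m + 1) := by rw [h3]
      nlinarith
    have := Nat.le_of_mul_le_mul_left this (by omega)
    rw [hm]; nlinarith
  · intro hmod
    obtain ⟨p, hp, hpS⟩ : ∃ p ∈ M, ((∃ q ∈ M, ∃ r ∈ M, q ≠ r ∧ ∑ a ∈ M, a = q + r) →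
        ∃ r ∈ M, p ≠ r ∧ ∑ a ∈ M, a = p + r) := by
      by_cases hS : ∃ q ∈ M, ∃ r ∈ M, q ≠ r ∧ ∑ a ∈ M, a = q + r
      · obtain ⟨q, hq, hr⟩ := hS
        exact ⟨q, hq, fun _ => hr⟩
      · obtain ⟨p, hp⟩ := Finset.card_pos.1 (show 0 < M.card by omega)
        exact ⟨p, hp, fun h => absurd h hS⟩
    have hb := bound_p h hp (k := M.card / 3) (fun x => by have := hl x; omega) (by
      intro x hx hpU
      have h1 := hl x
      have h2 := sum_M h x
      rw [hx, even_smul (by rw [Nat.even_iff]; omega), add_zero] at h2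
      obtain ⟨q, r, hqr, hq⟩ := Finset.card_eq_two.1 (show (M \ U M x).card = 2 by omega)
      rw [hq, Finset.sum_pair hqr] at h2
      have hqm : q ∈ M \ U M x := by rw [hq]; simp
      have hrm : r ∈ M \ U M x := by rw [hq]; simp
      rw [Finset.mem_sdiff] at hqm hrm
      obtain ⟨u, hu, hpu, he⟩ := hpS ⟨q, hqm.1, r, hrm.1, hqr, h2⟩
      have hpq : p ≠ q := fun e => hqm.2 (e ▸ hpU)
      have hpr : p ≠ r := fun e => hrm.2 (e ▸ hpU)
      have heq : p + u = q + r := by rw [← he, h2]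
      refine h p hp u hu q hqm.1 r hrm.1 ⟨hpu, hpq, hpr, ?_, ?_, hqr⟩ heq
      · rintro rfl; exact hpr (by linear_combination heq)
      · rintro rfl; exact hpq (by linear_combination heq))
    have h3 : 3 * (M.card / 3) = m := by omega
    rw [hX] at hb
    have : m * ((m + 2) * (m + 1) + 3 * (m + 1)) ≤ m * (2 * X) := by
      have : X * (3 * (M.card / 3)) = X * m := by rw [h3]
      nlinarith
    have := Nat.le_of_mul_le_mul_left this (by omega)
    rw [hm]; nlinarith
  · intro hmod
    have hb := bound_E h (k := M.card / 3 - 1) (E := {∑ a ∈ M, a})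
      (fun x => by have := hl x; omega) (by
      intro x hx
      have h1 := hl x
      have h2 := sum_M h x
      rw [hx, odd_smul (by rw [Nat.odd_iff]; omega),
        Finset.card_eq_zero.1 (show (M \ U M x).card = 0 by omega), Finset.sum_empty,
        zero_add] at h2
      rw [h2]; simp)
    obtain ⟨j, hj⟩ : ∃ j, M.card / 3 = j + 1 := ⟨M.card / 3 - 1, by omega⟩
    have h3 : m = 3 * j + 1 := by omega
    rw [hX, Finset.card_singleton, hj, Nat.add_sub_cancel] at hb
    by_contra hcon
    push Not at hcon
    rw [hm] at hcon
    subst h3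
    have : 2 ≤ j := by omega
    have hXb : 2 * X ≤ (3 * j + 1 + 2 + 1) ^ 2 - 2 * (3 * j + 1 + 2) := by omega
    have hXc : 2 * X ≤ 9 * j ^ 2 + 18 * j + 10 := by nlinarith
    have := Nat.mul_le_mul_right j hXc
    nlinarith
  · intro hmod
    have hb := bound_E h (k := M.card / 3 - 1) (E := M.image fun q => (∑ a ∈ M, a) + q)
      (fun x => by have := hl x; omega) (by
      intro x hx
      have h1 := hl x
      have h2 := sum_M h x
      rw [hx, odd_smul (by rw [Nat.odd_iff]; omega)] at h2
      obtain ⟨q, hq⟩ := Finset.card_eq_one.1 (show (M \ U M x).card = 1 by omega)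
      have hqm : q ∈ M \ U M x := by rw [hq]; simp
      rw [hq, Finset.sum_singleton] at h2
      rw [Finset.mem_image]
      exact ⟨q, (Finset.mem_sdiff.1 hqm).1, by linear_combination h2 + dbl q⟩)
    have hE : (M.image fun q => (∑ a ∈ M, a) + q).card ≤ M.card := Finset.card_image_le
    obtain ⟨j, hj⟩ : ∃ j, M.card / 3 = j + 1 := ⟨M.card / 3 - 1, by omega⟩
    have h3 : m = 3 * j + 2 := by omega
    rw [hX, hj, Nat.add_sub_cancel] at hb
    replace hb := hb.trans (Nat.add_le_add_left hE _)
    by_contra hcon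
    push Not at hcon
    rw [hm] at hcon hb
    rw [hm] at c3
    subst h3
    have : 2 ≤ j := by omega
    have hXc : 2 * X ≤ 9 * j ^ 2 + 27 * j + 6 := by nlinarith
    have := Nat.mul_le_mul_right j hXc
    nlinarith

/-- From a code to a Sidon set. -/
lemma code_sidon {n t : ℕ} (hn : t ≤ n) (C : Submodule (ZMod 2) (Fin n → ZMod 2))
    (hC : Module.finrank (ZMod 2) C = n - t) (hd : ∀ v ∈ C, v ≠ 0 → 5 ≤ hammingNorm v) :
    ∃ M : Finset (Fin t → ZMod 2), IsSidon M ∧ M.card = n + 1 := by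
  classical
  have hq : Module.finrank (ZMod 2) ((Fin n → ZMod 2) ⧸ C) = t := by
    have := C.finrank_quotient_add_finrank
    rw [hC, Module.finrank_fin_fun] at this
    omega
  have e : ((Fin n → ZMod 2) ⧸ C) ≃ₗ[ZMod 2] (Fin t → ZMod 2) :=
    LinearEquiv.ofFinrankEq _ _ (by rw [hq, Module.finrank_fin_fun])
  let φ : (Fin n → ZMod 2) →ₗ[ZMod 2] (Fin t → ZMod 2) := e.toLinearMap ∘ₗ C.mkQ
  have hφ : ∀ v, φ v = 0 → v ∈ C := by
    intro v hv
    have : C.mkQ v = 0 := e.injective (by simpa [φ] using hv)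
    simpa using this
  let v : Option (Fin n) → (Fin n → ZMod 2) := fun o => o.elim 0 (fun i => Pi.single i 1)
  have hv1 : ∀ o, hammingNorm (v o) ≤ 1 := by
    intro o
    rcases o with _ | i
    · simp [v]
    · simp only [v, Option.elim, hammingNorm]
      rw [Finset.card_le_one]
      intro a ha b hb
      simp only [Finset.mem_filter, Finset.mem_univ, true_and, Pi.single_apply, ne_eq,
        ite_eq_right_iff, one_ne_zero, imp_false, not_not] at ha hb
      rw [ha, hb]
  have hadd : ∀ x y : Fin n → ZMod 2, hammingNorm (x + y) ≤ hammingNorm x + hammingNorm y := by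
    intro x y
    simp only [hammingNorm]
    refine le_trans (Finset.card_le_card ?_) (Finset.card_union_le _ _)
    intro i
    simp only [Finset.mem_filter, Finset.mem_univ, true_and, Finset.mem_union, Pi.add_apply]
    intro hne
    by_contra hcon
    push Not at hcon
    exact hne (by rw [hcon.1, hcon.2, add_zero])
  have key : ∀ o₁ o₂ o₃ o₄, φ (v o₁) + φ (v o₂) + φ (v o₃) + φ (v o₄) = 0 →
      v o₁ + v o₂ + v o₃ + v o₄ = 0 := by
    intro o₁ o₂ o₃ o₄ h0
    by_contra hne
    have h5 := hd _ (hφ _ (by simpa only [map_add] using h0)) hne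
    have := hadd (v o₁ + v o₂ + v o₃) (v o₄)
    have := hadd (v o₁ + v o₂) (v o₃)
    have := hadd (v o₁) (v o₂)
    have := hv1 o₁
    have := hv1 o₂
    have := hv1 o₃
    have := hv1 o₄
    omega
  have hvinj : Function.Injective v := by
    intro a b hab
    rcases a with _ | i <;> rcases b with _ | j
    · rfl
    · have := congrFun hab j; simp [v] at this
    · have := congrFun hab i; simp [v] at this
    · have := congrFun hab i
      by_cases hij : i = j
      · rw [hij]
      · simp [v, Pi.single_apply, hij] at this
  have hinj : Function.Injective (fun o => φ (v o)) := by
    intro a b hab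
    simp only at hab
    have hv0 : v none = 0 := rfl
    have := key a b none none (by rw [hab, hv0, map_zero, add_zero, add_zero]; exact dbl _)
    rw [hv0, add_zero, add_zero] at this
    exact hvinj (by linear_combination this - dbl (v b))
  refine ⟨Finset.univ.image (fun o => φ (v o)), ?_, ?_⟩
  · intro m₁ h₁ m₂ h₂ m₃ h₃ m₄ h₄ hne heq
    simp only [Finset.mem_image, Finset.mem_univ, true_and] at h₁ h₂ h₃ h₄
    obtain ⟨o₁, rfl⟩ := h₁
    obtain ⟨o₂, rfl⟩ := h₂
    obtain ⟨o₃, rfl⟩ := h₃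
    obtain ⟨o₄, rfl⟩ := h₄
    have hz := key o₁ o₂ o₃ o₄
      (by linear_combination heq + dbl (φ (v o₃)) + dbl (φ (v o₄)))
    have n12 : o₁ ≠ o₂ := fun e => hne.1 (by rw [e])
    have n13 : o₁ ≠ o₃ := fun e => hne.2.1 (by rw [e])
    have n14 : o₁ ≠ o₄ := fun e => hne.2.2.1 (by rw [e])
    have n23 : o₂ ≠ o₃ := fun e => hne.2.2.2.1 (by rw [e])
    have n24 : o₂ ≠ o₄ := fun e => hne.2.2.2.2.1 (by rw [e])
    have hval : ∀ (i : Fin n) (o : Option (Fin n)), some i ≠ o → v o i = 0 := by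
      intro i o ho
      rcases o with _ | j
      · rfl
      · have : i ≠ j := fun e => ho (by rw [e])
        simp [v, Pi.single_apply, this]
    have hself : ∀ i : Fin n, v (some i) i = 1 := by intro i; simp [v]
    rcases o₁ with _ | i
    · rcases o₂ with _ | i
      · exact n12 rfl
      · have := congrFun hz i
        simp only [Pi.add_apply, hself, hval i _ n12.symm, hval i _ n23, hval i _ n24,
          Pi.zero_apply] at this
        simp at this
    · have := congrFun hz i
      simp only [Pi.add_apply, hself, hval i _ n12, hval i _ n13, hval i _ n14,
        Pi.zero_apply] at this
      simp at this
  · rw [Finset.card_image_of_injective _ hinj]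
    simp

lemma sqrt_two_pow (j : ℕ) : Real.sqrt ((2 : ℝ) ^ j) = (2 : ℝ) ^ ((j : ℝ) / 2) := by
  rw [Real.sqrt_eq_rpow, ← Real.rpow_natCast, ← Real.rpow_mul (by norm_num)]
  congr 1; ring

lemma rpow_mul_sqrt (t : ℕ) (c d : ℝ) (h : ((t : ℝ) + 1) / 2 - c = d) :
    Real.sqrt ((2 : ℝ) ^ (t + 1)) * (2 : ℝ) ^ (-c) = (2 : ℝ) ^ d := by
  rw [sqrt_two_pow, ← Real.rpow_add (by norm_num), ← h]
  congr 1
  push_cast; ring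

lemma pow_ge (t : ℕ) (ht : 6 ≤ t) : (t + 2) ^ 2 ≤ 2 ^ (t + 1) := by
  induction t, ht using Nat.le_induction with
  | base => norm_num
  | succ n hn ih => rw [pow_succ 2 (n + 1)]; nlinarith

lemma two_pow_mod (r : ℕ) : 2 ^ (r + 1) % 6 = 2 ∨ 2 ^ (r + 1) % 6 = 4 := by
  induction r with
  | zero => simp
  | succ n ih => rw [pow_succ 2 (n + 1)]; omega

end SidonAux

theorem improved_codes_non_existence_sidon_bound (t : ℕ) (ht : 6 ≤ t)
    (N a b l : ℕ) (ε : ℝ)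
    (hN : N = ⌊Real.sqrt ((2 : ℝ) ^ (t + 1)) + 0.5⌋₊)
    (hab : N - 4 = 3 * a + b) (hb : b < 3)
    (hε : ε = Real.sqrt ((2 : ℝ) ^ (t + 1)) + 0.5 - N)
    (hl1 : Odd a → b = 0 → l = 1)
    (hl2 : Odd a → b = 1 → ε ≤ 1 - (2 : ℝ) ^ (-(((t : ℝ) - 4) / 2)) → l = 2)
    (hl3 : Odd a → b = 1 → 1 - (2 : ℝ) ^ (-(((t : ℝ) - 4) / 2)) < ε → l = 1)
    (hl4 : Odd a → b = 2 → l = 2)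
    (hl5 : Even a → b = 0 → ε ≤ 0.5 → l = 2)
    (hl6 : Even a → b = 0 → (0.5 : ℝ) < ε → l = 1)
    (hl7 : Even a → b = 1 → ε ≤ 1 - (2 : ℝ) ^ (-(((t : ℝ) - 5) / 2)) → l = 2)
    (hl8 : Even a → b = 1 → 1 - (2 : ℝ) ^ (-(((t : ℝ) - 5) / 2)) < ε →
      ε ≤ 1 - (2 : ℝ) ^ (-(((t : ℝ) + 7) / 2)) → l = 1)
    (hl9 : Even a → b = 1 → 1 - (2 : ℝ) ^ (-(((t : ℝ) + 7) / 2)) < ε → l = 0)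
    (hl10 : Even a → b = 2 → l = 0) :
    (¬ ∃ C : Submodule (ZMod 2) (Fin (N - l) → ZMod 2),
        Module.finrank (ZMod 2) C = (N - l) - t ∧
        ∀ v ∈ C, v ≠ 0 → 5 ≤ hammingNorm v) ∧
    (Odd t → sMax t ≤ 2 ^ ((t + 1) / 2) - 2) ∧
    (Even t → sMax t ≤ N - l) := by
  obtain ⟨S, hS⟩ : ∃ S, S = Real.sqrt ((2 : ℝ) ^ (t + 1)) := ⟨_, rfl⟩
  have hS0 : 0 ≤ S := by rw [hS]; positivity
  have hSS : S ^ 2 = (2 : ℝ) ^ (t + 1) := by rw [hS]; exact Real.sq_sqrt (by positivity)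
  have hSt : (t : ℝ) + 2 ≤ S := by
    rw [hS]
    apply Real.le_sqrt_of_sq_le
    exact_mod_cast SidonAux.pow_ge t ht
  have hS11 : (11 : ℝ) ≤ S := by
    rw [hS]
    apply Real.le_sqrt_of_sq_le
    calc (11 : ℝ) ^ 2 ≤ 2 ^ (6 + 1) := by norm_num
      _ ≤ 2 ^ (t + 1) := by gcongr; norm_num
  rw [← hS] at hN hε
  have hNle : (N : ℝ) ≤ S + 0.5 := by rw [hN]; exact Nat.floor_le (by positivity)
  have hNlt : S + 0.5 < N + 1 := by rw [hN]; exact Nat.lt_floor_add_one _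
  have hN11 : 11 ≤ N := by
    rw [hN]; apply Nat.le_floor; push_cast; linarith
  have hNt : t + 2 ≤ N := by
    rw [hN]; apply Nat.le_floor; push_cast; linarith
  have hD0 : 2 ^ (t + 1) ≤ N ^ 2 + N := by
    have : (2 : ℝ) ^ (t + 1) < (N : ℝ) ^ 2 + N + 1 := by
      rw [← hSS]; nlinarith
    have : 2 ^ (t + 1) < N ^ 2 + N + 1 := by exact_mod_cast this
    omega
  have step : ∀ c d : ℝ, ((t : ℝ) + 1) / 2 - c = d → ε ≤ 1 - (2 : ℝ) ^ (-c) →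
      (2 : ℝ) ^ (t + 1) + 2 * 2 ^ d < (N : ℝ) ^ 2 + N + 1 / 4 := by
    intro c d hcd hc
    have h1 := SidonAux.rpow_mul_sqrt t c d hcd
    rw [← hS] at h1
    have h2 : (0 : ℝ) < 2 ^ (-c) := by positivity
    have h3 : S + (2 : ℝ) ^ (-c) ≤ N + 1 / 2 := by linarith
    have h4 : (S + (2 : ℝ) ^ (-c)) ^ 2 ≤ (N + 1 / 2) ^ 2 := by gcongr
    rw [← h1, ← hSS]
    nlinarith [sq_pos_of_pos h2]
  have hl_le : l ≤ 2 ∧ ∀ M : Finset (Fin t → ZMod 2), IsSidon M → M.card ≠ N - l + 1 := by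
    have hcases : (Odd a ∧ a % 2 = 1) ∨ (Even a ∧ a % 2 = 0) := by
      rcases Nat.even_or_odd a with h | h
      · exact Or.inr ⟨h, Nat.even_iff.1 h⟩
      · exact Or.inl ⟨h, Nat.odd_iff.1 h⟩
    have main : ∀ j : ℕ, j = l → j ≤ 2 →
        (∀ M : Finset (Fin t → ZMod 2), IsSidon M → M.card = N - j + 1 → False) →
        l ≤ 2 ∧ ∀ M : Finset (Fin t → ZMod 2), IsSidon M → M.card ≠ N - l + 1 := by
      intro j hj hj2 hM
      subst hj
      exact ⟨hj2, fun M hs hc => hM M hs hc⟩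
    have hb3 : b = 0 ∨ b = 1 ∨ b = 2 := by omega
    rcases hcases with ⟨ha, ha2⟩ | ⟨ha, ha2⟩ <;> rcases hb3 with hb' | hb' | hb'
    · refine main 1 (hl1 ha hb').symm (by norm_num) fun M hM hc => ?_
      have hs : M.card = N := by omega
      have := (SidonAux.master hM (by omega)).2.2.1 (by omega)
      rw [hs] at this
      nlinarith
    · rcases le_or_gt ε (1 - (2 : ℝ) ^ (-(((t : ℝ) - 4) / 2))) with he | he
      · refine main 2 (hl2 ha hb' he).symm (by norm_num) fun M hM hc => ?_
        have hst := step _ (5 / 2) (by ring) he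
        have h25 : (5.5 : ℝ) ≤ 2 ^ (5 / 2 : ℝ) := by
          have := SidonAux.sqrt_two_pow 5
          push_cast at this
          rw [← this]
          apply Real.le_sqrt_of_sq_le; norm_num
        have h3 : (2 : ℝ) ^ (t + 1) + 11 < (N : ℝ) ^ 2 + N + 1 := by linarith
        have h4 : 2 ^ (t + 1) + 11 < N ^ 2 + N + 1 := by exact_mod_cast h3
        have hs : N = M.card + 1 := by omega
        have := (SidonAux.master hM (by omega)).2.2.1 (by omega)
        rw [hs] at h4
        nlinarith
      · refine main 1 (hl3 ha hb' he).symm (by norm_num) fun M hM hc => ?_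
        have hs : M.card = N := by omega
        have := (SidonAux.master hM (by omega)).2.2.2.1 (by omega)
        rw [hs] at this
        nlinarith
    · refine main 2 (hl4 ha hb').symm (by norm_num) fun M hM hc => ?_
      have hs : N = M.card + 1 := by omega
      have := (SidonAux.master hM (by omega)).2.2.2.1 (by omega)
      rw [hs] at hD0
      have : 10 ≤ M.card := by omega
      nlinarith
    · rcases le_or_gt ε 0.5 with he | he
      · refine main 2 (hl5 ha hb' he).symm (by norm_num) fun M hM hc => ?_
        have hSN : S ≤ N := by linarith
        have h3 : (2 : ℝ) ^ (t + 1) ≤ (N : ℝ) ^ 2 := by rw [← hSS]; gcongr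
        have h4 : 2 ^ (t + 1) ≤ N ^ 2 := by exact_mod_cast h3
        have hs : N = M.card + 1 := by omega
        have := (SidonAux.master hM (by omega)).2.2.2.2.1 (by omega)
        rw [hs] at h4
        omega
      · refine main 1 (hl6 ha hb' he).symm (by norm_num) fun M hM hc => ?_
        have hs : M.card = N := by omega
        have := (SidonAux.master hM (by omega)).2.2.2.2.2 (by omega)
        rw [hs] at this
        nlinarith
    · rcases le_or_gt ε (1 - (2 : ℝ) ^ (-(((t : ℝ) - 5) / 2))) with he | he
      · refine main 2 (hl7 ha hb' he).symm (by norm_num) fun M hM hc => ?_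
        have hst := step _ ((3 : ℕ) : ℝ) (by push_cast; ring) he
        rw [Real.rpow_natCast] at hst
        have h3 : (2 : ℝ) ^ (t + 1) + 16 < (N : ℝ) ^ 2 + N + 1 := by linarith
        have h4 : 2 ^ (t + 1) + 16 < N ^ 2 + N + 1 := by exact_mod_cast h3
        have hs : N = M.card + 1 := by omega
        have := (SidonAux.master hM (by omega)).2.2.2.2.2 (by omega)
        rw [hs] at h4
        nlinarith
      · rcases le_or_gt ε (1 - (2 : ℝ) ^ (-(((t : ℝ) + 7) / 2))) with he' | he'
        · refine main 1 (hl8 ha hb' he he').symm (by norm_num) fun M hM hc => ?_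
          have hst := step _ (-((3 : ℕ) : ℝ)) (by push_cast; ring) he'
          rw [Real.rpow_neg (by norm_num), Real.rpow_natCast] at hst
          have h3 : (2 : ℝ) ^ (t + 1) < (N : ℝ) ^ 2 + N := by linarith
          have h4 : 2 ^ (t + 1) < N ^ 2 + N := by exact_mod_cast h3
          have hs : M.card = N := by omega
          have := (SidonAux.master hM (by omega)).2.1 (by omega)
          rw [hs] at this
          omega
        · refine main 0 (hl9 ha hb' he').symm (by norm_num) fun M hM hc => ?_
          have hs : M.card = N + 1 := by omega
          have := (SidonAux.master hM (by omega)).1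
          rw [hs] at this
          nlinarith
    · refine main 0 (hl10 ha hb').symm (by norm_num) fun M hM hc => ?_
      have hs : M.card = N + 1 := by omega
      have := (SidonAux.master hM (by omega)).1
      rw [hs] at this
      nlinarith
  obtain ⟨hl_le, hno⟩ := hl_le
  have hmax : sMax t ≤ N - l := by
    refine csSup_le' ?_
    rintro n ⟨M, hM, rfl⟩
    by_contra hlt
    push Not at hlt
    obtain ⟨M', hM', hc⟩ := Finset.exists_subset_card_eq (show N - l + 1 ≤ M.card from hlt)
    exact hno M' (SidonAux.sidon_subset hM hM') hc
  refine ⟨?_, ?_, fun _ => hmax⟩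
  · rintro ⟨C, hC, hd⟩
    obtain ⟨M, hM, hc⟩ := SidonAux.code_sidon (by omega) C hC hd
    exact hno M hM hc
  · rintro ⟨r, hr⟩
    have hr1 : (t + 1) / 2 = r + 1 := by omega
    have hSr : S = (2 : ℝ) ^ (r + 1) := by
      rw [hS, show t + 1 = (r + 1) * 2 by omega, pow_mul]
      exact Real.sqrt_sq (by positivity)
    have hNr : N = 2 ^ (r + 1) := by
      rw [hN, Nat.floor_eq_iff (by positivity), hSr]
      push_cast
      constructor <;> linarith
    have hε5 : ε = 0.5 := by rw [hε, hSr, hNr]; push_cast; ring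
    have hl2' : l = 2 := by
      have hmod := SidonAux.two_pow_mod r
      rw [← hNr] at hmod
      rcases hmod with hmod | hmod
      · refine hl2 (Nat.odd_iff.2 (by omega)) (by omega) ?_
        have : (2 : ℝ) ^ (-(((t : ℝ) - 4) / 2)) ≤ 2 ^ (-1 : ℝ) := by
          apply Real.rpow_le_rpow_of_exponent_le (by norm_num)
          have : (7 : ℝ) ≤ t := by exact_mod_cast (show 7 ≤ t by omega)
          linarith
        rw [Real.rpow_neg_one] at this
        rw [hε5]
        norm_num at this ⊢
        linarith
      · exact hl5 (Nat.even_iff.2 (by omega)) (by omega) hε5.le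
    rw [hr1, ← hNr, ← hl2']
    exact hmax
end
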